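/- Let ν > −1 and x > 0. Then the limit lim_{y → x, y ≠ x} [ J_ν(2√x) · √y · J_ν′(2√y) − √x · J_ν′(2√x) · J_ν(2√y) ] / (x − y) exists and equals J_ν′(2√x)² + (1 − ν²/(4x)) · J_ν(2√x)², and this value also equals J_ν(2√x)² − J_{ν+1}(2√x) · J_{ν−1}(2√x). -/

import Mathlib

open Real Filter

/-- The Bessel function of the first kind `J_ν(z)`
(with the convention `1/Γ(m) = 0` at nonpositive integers `m`). -/
noncomputable def besselJ (ν z : ℝ) : ℝ :=
  ∑' n : ℕ, ((-1 : ℝ) ^ n / (Real.Gamma ((n : ℝ) + 1) * Real.Gamma ((n : ℝ) + 1 + ν))) *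
    (z / 2) ^ (2 * (n : ℝ) + ν)

/-- The derivative `J_ν′` of the Bessel function. -/
noncomputable def besselJ' (ν z : ℝ) : ℝ := deriv (fun w => besselJ ν w) z

/-- coefficients -/
noncomputable def bcoef (ν : ℝ) (n : ℕ) : ℝ :=
  (-1 : ℝ) ^ n / (Real.Gamma ((n : ℝ) + 1) * Real.Gamma ((n : ℝ) + 1 + ν))

noncomputable def bF (ν w : ℝ) : ℝ := ∑' n : ℕ, bcoef ν n * w ^ n

lemma gamma_inv_step (s : ℝ) : s * (Real.Gamma (s + 1))⁻¹ = (Real.Gamma s)⁻¹ := by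
  by_cases hs : s = 0
  · subst hs; simp [Real.Gamma_zero]
  · rw [Real.Gamma_add_one hs, mul_inv, ← mul_assoc, mul_inv_cancel₀ hs, one_mul]

lemma bcoef_shift (ν : ℝ) (n : ℕ) :
    ((n : ℝ) + 1) * bcoef ν (n + 1) = - bcoef (ν + 1) n := by
  unfold bcoef
  have h := gamma_inv_step ((n : ℝ) + 1)
  have e : ((n + 1 : ℕ) : ℝ) + 1 + ν = (n : ℝ) + 1 + (ν + 1) := by push_cast; ring
  rw [e, pow_succ]
  push_cast
  simp only [div_eq_mul_inv, mul_inv]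
  rw [← h]; ring

lemma bcoef_down (ν : ℝ) (n : ℕ) :
    ((n : ℝ) + ν) * bcoef ν n = bcoef (ν - 1) n := by
  unfold bcoef
  have h := gamma_inv_step ((n : ℝ) + ν)
  have e : (n : ℝ) + 1 + ν = (n : ℝ) + ν + 1 := by ring
  have e' : (n : ℝ) + 1 + (ν - 1) = (n : ℝ) + ν := by ring
  rw [e, e']
  simp only [div_eq_mul_inv, mul_inv]
  rw [← h]; ring

lemma bcoef_ratio (ν : ℝ) (n : ℕ) :
    ((n : ℝ) + 1) * ((n : ℝ) + 1 + ν) * bcoef ν (n + 1) = - bcoef ν n := by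
  have h1 := bcoef_down ν (n + 1)
  have h2 := bcoef_shift (ν - 1) n
  rw [sub_add_cancel] at h2
  rw [← h2, ← h1]; push_cast; ring

lemma bcoef_summable (ν w : ℝ) : Summable (fun n : ℕ => bcoef ν n * w ^ n) := by
  apply summable_of_ratio_norm_eventually_le (r := 1 / 2) (by norm_num)
  obtain ⟨N, hN⟩ := exists_nat_gt (|ν| + 2 * |w|)
  filter_upwards [eventually_ge_atTop N] with n hn
  have hn' : (N : ℝ) ≤ n := by exact_mod_cast hn
  have h := congrArg abs (bcoef_ratio ν n)
  have hν := neg_abs_le ν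
  have hw := abs_nonneg w
  have hv := abs_nonneg ν
  have hp : 0 < (n : ℝ) + 1 + ν := by linarith
  have hp1 : (0 : ℝ) < (n : ℝ) + 1 := by positivity
  rw [abs_neg, abs_mul, abs_mul, abs_of_pos hp, abs_of_pos hp1] at h
  rw [Real.norm_eq_abs, Real.norm_eq_abs, abs_mul, abs_mul, pow_succ, abs_mul, ← h]
  have hb := abs_nonneg (bcoef ν (n + 1))
  have hwn := abs_nonneg (w ^ n)
  have key : |w| ≤ 1 / 2 * (((n : ℝ) + 1) * ((n : ℝ) + 1 + ν)) := by nlinarith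
  calc |bcoef ν (n + 1)| * (|w ^ n| * |w|) = |bcoef ν (n + 1)| * |w ^ n| * |w| := by ring
    _ ≤ |bcoef ν (n + 1)| * |w ^ n| * (1 / 2 * (((n : ℝ) + 1) * ((n : ℝ) + 1 + ν))) := by
        gcongr
    _ = _ := by ring

lemma bcoef_succ_pow (ν w : ℝ) (n : ℕ) :
    bcoef ν (n + 1) * (((n + 1 : ℕ) : ℝ) * w ^ n) = - (bcoef (ν + 1) n * w ^ n) := by
  have := bcoef_shift ν n
  push_cast
  linear_combination w ^ n * this

lemma bF_hasDerivAt (ν w : ℝ) : HasDerivAt (bF ν) (- bF (ν + 1) w) w := by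
  have hs : Summable (fun n : ℕ => ‖bcoef ν n * ((n : ℝ) * (|w| + 1) ^ (n - 1))‖) := by
    rw [← summable_nat_add_iff 1]
    simp only [Nat.add_sub_cancel, bcoef_succ_pow, norm_neg]
    exact (bcoef_summable (ν + 1) (|w| + 1)).norm
  have h := hasDerivAt_tsum_of_isPreconnected (𝕜 := ℝ) (t := Metric.ball (0 : ℝ) (|w| + 1))
    (g := fun (n : ℕ) (y : ℝ) => bcoef ν n * y ^ n)
    (g' := fun (n : ℕ) (y : ℝ) => bcoef ν n * ((n : ℝ) * y ^ (n - 1))) (y₀ := 0) (y := w)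
    hs Metric.isOpen_ball (convex_ball _ _).isPreconnected
    (fun n y _ => (hasDerivAt_pow n y).const_mul _)
    (fun n y hy => by
      have hy' : |y| ≤ |w| + 1 := by
        have := mem_ball_zero_iff.1 hy
        rw [Real.norm_eq_abs] at this; exact this.le
      rw [norm_mul, norm_mul, norm_mul, norm_mul, norm_pow, norm_pow, Real.norm_eq_abs y,
        Real.norm_eq_abs (|w| + 1), abs_of_nonneg (by positivity : (0 : ℝ) ≤ |w| + 1)]
      gcongr)
    (by simp; positivity) (bcoef_summable ν 0) (by simp)
  have e : ∑' n : ℕ, bcoef ν n * ((n : ℝ) * w ^ (n - 1)) = - bF (ν + 1) w := by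
    have hs2 : Summable (fun n : ℕ => bcoef ν n * ((n : ℝ) * w ^ (n - 1))) := by
      rw [← summable_nat_add_iff 1]
      simp only [Nat.add_sub_cancel, bcoef_succ_pow]
      exact (bcoef_summable (ν + 1) w).neg
    rw [hs2.tsum_eq_zero_add]
    simp only [Nat.add_sub_cancel, bcoef_succ_pow, tsum_neg]
    simp [bF]
  rw [e] at h
  exact h

lemma bF_rec (ν w : ℝ) : bF (ν - 1) w = ν * bF ν w - w * bF (ν + 1) w := by
  have h1 : ∀ n : ℕ, bcoef (ν - 1) n * w ^ n =
      ν * (bcoef ν n * w ^ n) + (n : ℝ) * bcoef ν n * w ^ n := by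
    intro n; rw [← bcoef_down]; ring
  have h2 : ∀ n : ℕ, ((n + 1 : ℕ) : ℝ) * bcoef ν (n + 1) * w ^ (n + 1) =
      - w * (bcoef (ν + 1) n * w ^ n) := by
    intro n
    have := bcoef_shift ν n
    push_cast
    rw [this, pow_succ]; ring
  have hs2 : Summable (fun n : ℕ => (n : ℝ) * bcoef ν n * w ^ n) := by
    rw [← summable_nat_add_iff 1]
    simp only [h2]
    exact (bcoef_summable (ν + 1) w).mul_left _
  unfold bF
  simp only [h1]
  rw [((bcoef_summable ν w).mul_left ν).tsum_add hs2, hs2.tsum_eq_zero_add]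
  simp only [h2, tsum_mul_left]
  simp
  ring

lemma besselJ_eq (ν z : ℝ) (hz : 0 < z) : besselJ ν z = (z / 2) ^ ν * bF ν ((z / 2) ^ 2) := by
  unfold besselJ bF
  rw [← tsum_mul_left]
  congr 1; ext n
  rw [Real.rpow_add (by positivity), ← pow_mul]
  have : (z / 2) ^ (2 * (n : ℝ)) = (z / 2) ^ (2 * n) := by
    rw [← Real.rpow_natCast]; push_cast; rfl
  rw [this]; unfold bcoef; ring

lemma besselJ_rec (ν z : ℝ) (hz : 0 < z) :
    besselJ (ν - 1) z = 2 * ν / z * besselJ ν z - besselJ (ν + 1) z := by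
  rw [besselJ_eq _ _ hz, besselJ_eq _ _ hz, besselJ_eq _ _ hz, bF_rec,
    Real.rpow_add (by positivity), Real.rpow_sub (by positivity), Real.rpow_one]
  field_simp

lemma besselJ_hasDerivAt (ν z : ℝ) (hz : 0 < z) :
    HasDerivAt (besselJ ν) (ν / z * besselJ ν z - besselJ (ν + 1) z) z := by
  have h0 : HasDerivAt (fun y : ℝ => y / 2) (1 / 2) z := (hasDerivAt_id z).div_const 2
  have h1 := h0.rpow_const (p := ν) (Or.inl (by positivity))
  have h2 := (bF_hasDerivAt ν ((z / 2) ^ 2)).comp z (h0.pow 2)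
  have h3 := h1.mul h2
  have h4 : HasDerivAt (besselJ ν) _ z := h3.congr_of_eventuallyEq (by
    filter_upwards [lt_mem_nhds hz] with y hy
    simp [besselJ_eq ν y hy])
  convert h4 using 1
  rw [besselJ_eq _ _ hz, besselJ_eq _ _ hz,
    Real.rpow_add (by positivity), Real.rpow_sub (by positivity), Real.rpow_one]
  simp
  field_simp
  ring

lemma besselJ'_eq (ν z : ℝ) (hz : 0 < z) :
    besselJ' ν z = ν / z * besselJ ν z - besselJ (ν + 1) z :=
  (besselJ_hasDerivAt ν z hz).deriv

lemma besselJ'_hasDerivAt (ν z : ℝ) (hz : 0 < z) :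
    HasDerivAt (besselJ' ν) (- besselJ' ν z / z - (1 - ν ^ 2 / z ^ 2) * besselJ ν z) z := by
  have h1 := ((hasDerivAt_const z ν).div (hasDerivAt_id z) hz.ne').mul (besselJ_hasDerivAt ν z hz)
  have h2 := h1.sub (besselJ_hasDerivAt (ν + 1) z hz)
  have h4 : HasDerivAt (besselJ' ν) _ z := h2.congr_of_eventuallyEq (by
    filter_upwards [lt_mem_nhds hz] with y hy
    simp [besselJ'_eq ν y hy])
  convert h4 using 1
  have r := besselJ_rec (ν + 1) z hz
  rw [add_sub_cancel_right] at r
  have r' : besselJ (ν + 1 + 1) z = 2 * (ν + 1) / z * besselJ (ν + 1) z - besselJ ν z := by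
    linarith
  rw [r', besselJ'_eq ν z hz]
  simp
  field_simp
  ring

/-- The diagonal value of the Bessel kernel: the limit defining `K_{J_ν}(x|x)`
exists and equals the particle density `ρ_ν(x)` in both of its standard forms. -/
theorem bessel_kernel_diagonal
    (ν : ℝ) (hν : -1 < ν) (x : ℝ) (hx : 0 < x) :
    Tendsto
      (fun y : ℝ =>
        (besselJ ν (2 * Real.sqrt x) * Real.sqrt y * besselJ' ν (2 * Real.sqrt y) -
            Real.sqrt x * besselJ' ν (2 * Real.sqrt x) * besselJ ν (2 * Real.sqrt y)) /
          (x - y))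
      (nhdsWithin x {x}ᶜ)
      (nhds ((besselJ' ν (2 * Real.sqrt x)) ^ 2 +
        (1 - ν ^ 2 / (4 * x)) * (besselJ ν (2 * Real.sqrt x)) ^ 2)) ∧
    (besselJ' ν (2 * Real.sqrt x)) ^ 2 +
        (1 - ν ^ 2 / (4 * x)) * (besselJ ν (2 * Real.sqrt x)) ^ 2
      = (besselJ ν (2 * Real.sqrt x)) ^ 2 -
          besselJ (ν + 1) (2 * Real.sqrt x) * besselJ (ν - 1) (2 * Real.sqrt x) := by
  have hs : 0 < Real.sqrt x := Real.sqrt_pos.2 hx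
  have hz : 0 < 2 * Real.sqrt x := by positivity
  have hsq : x = Real.sqrt x ^ 2 := (Real.sq_sqrt hx.le).symm
  have hx4 : 4 * x = (2 * Real.sqrt x) ^ 2 := by rw [mul_pow, ← hsq]; norm_num
  constructor
  · have d0 := Real.hasDerivAt_sqrt hx.ne'
    have d1 := d0.const_mul 2
    have dJ := (besselJ_hasDerivAt ν _ hz).comp x d1
    rw [← besselJ'_eq ν _ hz] at dJ
    have dJ' := (besselJ'_hasDerivAt ν _ hz).comp x d1
    have dN := (((d0.const_mul (besselJ ν (2 * Real.sqrt x))).mul dJ').sub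
      (dJ.const_mul (Real.sqrt x * besselJ' ν (2 * Real.sqrt x)))).neg
    have t := hasDerivAt_iff_tendsto_slope.1 dN
    convert t using 1
    · ext y
      simp only [slope_def_field, Pi.neg_apply, Pi.sub_apply, Pi.mul_apply, Function.comp]
      rw [← neg_sub y x, div_neg, ← neg_div]
      congr 1
      ring
    · congr 1
      rw [hx4]
      simp only [Function.comp]
      field_simp
      ring
  · rw [hx4, besselJ_rec ν _ hz, besselJ'_eq ν _ hz]
    field_simp
    ring
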